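/- arXiv:2205.00494 — 3 statements merged into one kernel-verified Lean document; each statement's English description precedes it below -/
import Mathlib

section
/- Let A = Γ_θ − Γ̃. Then eᵀA^{−T}e ≠ 0, eᵀ(Γ_θ+Γ̃)^{−1}e ≠ 0, and the first fundamental solution satisfies v := (Γ_θ+Γ̃)^{−1}e / (eᵀ(Γ_θ+Γ̃)^{−1}e) = A^{−T}e / (eᵀA^{−T}e); moreover the second fundamental solution is w := (Γ_θ−Γ̃)^{−1}e / (eᵀ(Γ_θ−Γ̃)^{−1}e) = A^{−1}e / (eᵀA^{−1}e). -/
open Matrix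

/-!
Write `Γθ = Γ + D`, with `D = 2θI` in the theorem. Since `Γ = Γt + Γtᵀ` is symmetric,
`Aᵀ = D + Γt` and `Γθ + Γt = Aᵀ + Γ`. The quadratic form of `D + Γt` is that of `D + Γ/2`, so
`Aᵀ` is invertible and `eᵀA⁻ᵀe > 0`. As `Γ = G e eᵀ` has rank one, passing from `Aᵀ` to `Γθ + Γt`
only rescales the solution of `M x = e` (Sherman–Morrison), and the normalization removes the
scale.
-/

section

variable {ι R K : Type*}

theorem eq_smul_vecMulVec_one_of_apply_eq [NonAssocSemiring R] {g : R} {S : Matrix ι ι R}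
    (hS : ∀ i j, S i j = g) : S = g • vecMulVec 1 1 := by
  ext i j
  rw [hS, Matrix.smul_apply, vecMulVec_apply, Pi.one_apply, Pi.one_apply, mul_one, smul_eq_mul,
    mul_one]

theorem add_transpose_eq_of_lowerTriangular_of_apply_eq [LinearOrder ι] [Field K]
    [NeZero (2 : K)] {g : K} {S T : Matrix ι ι K} (hS : ∀ i j, S i j = g)
    (hT : ∀ i j, T i j = if j < i then g else if i = j then g / 2 else 0) : T + Tᵀ = S := by
  ext i j
  rw [Matrix.add_apply, transpose_apply, hS, hT, hT]
  obtain hij | rfl | hij := lt_trichotomy i j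
  · simp [hij, hij.ne, hij.not_gt]
  · simp
  · simp [hij, hij.ne, hij.not_gt]

theorem transpose_add_sub_of_add_transpose_eq [AddCommGroup R] {S D T : Matrix ι ι R}
    (hD : D.IsSymm) (hT : T + Tᵀ = S) : (S + D - T)ᵀ = D + T := by
  rw [← hT, transpose_sub, transpose_add, transpose_add, transpose_transpose, hD.eq]
  abel

variable [Fintype ι]

theorem two_mul_dotProduct_mulVec_self [CommSemiring R] (M : Matrix ι ι R) (x : ι → R) :
    2 * (x ⬝ᵥ (M *ᵥ x)) = x ⬝ᵥ ((M + Mᵀ) *ᵥ x) := by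
  rw [add_mulVec, dotProduct_add, dotProduct_transpose_mulVec, two_mul]

theorem dotProduct_smul_vecMulVec_self_mulVec [CommSemiring R] (g : R) (e x : ι → R) :
    x ⬝ᵥ ((g • vecMulVec e e) *ᵥ x) = g * (e ⬝ᵥ x) ^ 2 := by
  rw [smul_mulVec, vecMulVec_mulVec, op_smul_eq_smul, dotProduct_smul, dotProduct_smul,
    dotProduct_comm x e, smul_eq_mul, smul_eq_mul, sq]

theorem dotProduct_add_mulVec_self_pos [CommRing R] [LinearOrder R] [IsStrictOrderedRing R]
    {D T : Matrix ι ι R} {g : R} {e x : ι → R} (hg : 0 ≤ g) (hD : 0 < x ⬝ᵥ (D *ᵥ x))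
    (hT : T + Tᵀ = g • vecMulVec e e) : 0 < x ⬝ᵥ ((D + T) *ᵥ x) := by
  have hTx : 2 * (x ⬝ᵥ (T *ᵥ x)) = g * (e ⬝ᵥ x) ^ 2 := by
    rw [two_mul_dotProduct_mulVec_self, hT, dotProduct_smul_vecMulVec_self_mulVec]
  have hsq : 0 ≤ g * (e ⬝ᵥ x) ^ 2 := by positivity
  rw [add_mulVec, dotProduct_add]
  linarith

theorem inv_dotProduct_smul_smul [Field K] {c : K} (hc : c ≠ 0) (w x : ι → K) :
    (w ⬝ᵥ (c • x))⁻¹ • (c • x) = (w ⬝ᵥ x)⁻¹ • x := by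
  rw [dotProduct_smul, smul_eq_mul, smul_smul, mul_inv, mul_right_comm, inv_mul_cancel₀ hc,
    one_mul]

variable [DecidableEq ι]

theorem dotProduct_smul_one_mulVec_self_pos [CommRing R] [LinearOrder R]
    [IsStrictOrderedRing R] {c : R} (hc : 0 < c) {x : ι → R} (hx : x ≠ 0) :
    0 < x ⬝ᵥ ((c • (1 : Matrix ι ι R)) *ᵥ x) := by
  rw [smul_mulVec, one_mulVec, dotProduct_smul, smul_eq_mul]
  have hxx : 0 ≤ x ⬝ᵥ x := Finset.sum_nonneg fun i _ => mul_self_nonneg (x i)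
  exact mul_pos hc (hxx.lt_of_ne' (dotProduct_self_eq_zero.not.mpr hx))

theorem isUnit_det_of_dotProduct_mulVec_self_ne_zero [Field K] {M : Matrix ι ι K}
    (hM : ∀ x, x ≠ 0 → x ⬝ᵥ (M *ᵥ x) ≠ 0) : IsUnit M.det := by
  rw [isUnit_iff_ne_zero]
  intro hdet
  obtain ⟨x, hx, hMx⟩ := exists_mulVec_eq_zero_iff.mpr hdet
  exact hM x hx (by rw [hMx, dotProduct_zero])

theorem mulVec_inv_mulVec_cancel [CommRing R] {M : Matrix ι ι R} (hM : IsUnit M.det)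
    (u : ι → R) : M *ᵥ (M⁻¹ *ᵥ u) = u := by
  rw [mulVec_mulVec, mul_nonsing_inv _ hM, one_mulVec]

theorem inv_mulVec_mulVec_cancel [CommRing R] {M : Matrix ι ι R} (hM : IsUnit M.det)
    (x : ι → R) : M⁻¹ *ᵥ (M *ᵥ x) = x := by
  rw [mulVec_mulVec, nonsing_inv_mul _ hM, one_mulVec]

theorem dotProduct_inv_mulVec_self_pos [Field K] [Preorder K] {M : Matrix ι ι K} {e : ι → K}
    (hM : ∀ x, x ≠ 0 → 0 < x ⬝ᵥ (M *ᵥ x)) (he : e ≠ 0) : 0 < e ⬝ᵥ (M⁻¹ *ᵥ e) := by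
  have hsolve : M *ᵥ (M⁻¹ *ᵥ e) = e :=
    mulVec_inv_mulVec_cancel
      (isUnit_det_of_dotProduct_mulVec_self_ne_zero fun x hx => (hM x hx).ne') e
  have hne : M⁻¹ *ᵥ e ≠ 0 := fun h => he (by rw [← hsolve, h, mulVec_zero])
  have hpos := hM _ hne
  rwa [hsolve, dotProduct_comm] at hpos

theorem det_add_vecMulVec_eq [CommRing R] {M : Matrix ι ι R} (hM : IsUnit M.det) (u w : ι → R) :
    (M + vecMulVec u w).det = M.det * (1 + w ⬝ᵥ (M⁻¹ *ᵥ u)) := by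
  rw [vecMulVec_eq Unit, det_add_replicateCol_mul_replicateRow hM, Matrix.mul_assoc,
    ← replicateCol_mulVec, det_unique (n := Unit), Matrix.add_apply, one_apply_eq,
    replicateRow_mul_replicateCol_apply]

theorem smul_inv_add_vecMulVec_mulVec [CommRing R] {M : Matrix ι ι R} (hM : IsUnit M.det)
    {u w : ι → R} (hc : IsUnit (1 + w ⬝ᵥ (M⁻¹ *ᵥ u))) :
    (1 + w ⬝ᵥ (M⁻¹ *ᵥ u)) • ((M + vecMulVec u w)⁻¹ *ᵥ u) = M⁻¹ *ᵥ u := by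
  have hdet : IsUnit (M + vecMulVec u w).det := by
    rw [det_add_vecMulVec_eq hM]
    exact hM.mul hc
  have hsolve : (M + vecMulVec u w) *ᵥ (M⁻¹ *ᵥ u) = (1 + w ⬝ᵥ (M⁻¹ *ᵥ u)) • u := by
    rw [add_mulVec, mulVec_inv_mulVec_cancel hM, vecMulVec_mulVec, op_smul_eq_smul, add_smul,
      one_smul]
  rw [← mulVec_smul, ← hsolve, inv_mulVec_mulVec_cancel hdet]

theorem stmt_3_general [Field K] [LinearOrder K] [IsStrictOrderedRing K] {g : K}
    {D Γ Γθ Γt A : Matrix ι ι K} {e : ι → K} (hg : 0 ≤ g) (he : e ≠ 0)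
    (hD : D.IsSymm) (hDpos : ∀ x, x ≠ 0 → 0 < x ⬝ᵥ (D *ᵥ x)) (hΓ : Γ = g • vecMulVec e e)
    (hΓθ : Γθ = Γ + D) (hΓt : Γt + Γtᵀ = Γ) (hA : A = Γθ - Γt) :
    e ⬝ᵥ ((Aᵀ)⁻¹ *ᵥ e) ≠ 0 ∧
    e ⬝ᵥ ((Γθ + Γt)⁻¹ *ᵥ e) ≠ 0 ∧
    (e ⬝ᵥ ((Γθ + Γt)⁻¹ *ᵥ e))⁻¹ • ((Γθ + Γt)⁻¹ *ᵥ e)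
      = (e ⬝ᵥ ((Aᵀ)⁻¹ *ᵥ e))⁻¹ • ((Aᵀ)⁻¹ *ᵥ e) ∧
    (e ⬝ᵥ ((Γθ - Γt)⁻¹ *ᵥ e))⁻¹ • ((Γθ - Γt)⁻¹ *ᵥ e)
      = (e ⬝ᵥ (A⁻¹ *ᵥ e))⁻¹ • (A⁻¹ *ᵥ e) := by
  have hAt : Aᵀ = D + Γt := by rw [hA, hΓθ, transpose_add_sub_of_add_transpose_eq hD hΓt]
  have hrank : Γθ + Γt = Aᵀ + vecMulVec e (g • e) := by
    rw [hΓθ, hAt, hΓ, vecMulVec_smul]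
    abel
  have hform : ∀ x, x ≠ 0 → 0 < x ⬝ᵥ (Aᵀ *ᵥ x) := fun x hx =>
    hAt ▸ dotProduct_add_mulVec_self_pos hg (hDpos x hx) (hΓt.trans hΓ)
  have hpos : 0 < e ⬝ᵥ ((Aᵀ)⁻¹ *ᵥ e) := dotProduct_inv_mulVec_self_pos hform he
  have hc : 1 + (g • e) ⬝ᵥ ((Aᵀ)⁻¹ *ᵥ e) ≠ 0 := by
    rw [smul_dotProduct, smul_eq_mul]
    positivity
  have hsolve := smul_inv_add_vecMulVec_mulVec
    (isUnit_det_of_dotProduct_mulVec_self_ne_zero fun x hx => (hform x hx).ne') hc.isUnit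
  rw [← hrank] at hsolve
  refine ⟨hpos.ne', fun h => hpos.ne' ?_, ?_, by rw [hA]⟩
  · rw [← hsolve, dotProduct_smul, h, smul_zero]
  · rw [← inv_dotProduct_smul_smul hc, hsolve]

end

/-- With `A = Γ_θ − Γ̃`: `eᵀA^{−T}e ≠ 0`, `eᵀ(Γ_θ+Γ̃)⁻¹e ≠ 0`, the first fundamental
solution satisfies `v = (Γ_θ+Γ̃)⁻¹e/(eᵀ(Γ_θ+Γ̃)⁻¹e) = A^{−T}e/(eᵀA^{−T}e)`, and the
second fundamental solution is `w = (Γ_θ−Γ̃)⁻¹e/(eᵀ(Γ_θ−Γ̃)⁻¹e) = A⁻¹e/(eᵀA⁻¹e)`. -/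
theorem stmt_3 (N : ℕ) (hN : 1 ≤ N) (G θ : ℝ) (hG : 0 < G) (hθ : 0 < θ)
    (Γ Γθ Γt A : Matrix (Fin (N+1)) (Fin (N+1)) ℝ)
    (hΓ : ∀ i j : Fin (N+1), Γ i j = G)
    (hΓθ : Γθ = Γ + (2*θ) • (1 : Matrix (Fin (N+1)) (Fin (N+1)) ℝ))
    (hΓt : ∀ i j : Fin (N+1), Γt i j = if j < i then G else if i = j then G/2 else 0)
    (hA : A = Γθ - Γt)
    (e : Fin (N+1) → ℝ) (he : e = fun _ => 1) :
    e ⬝ᵥ ((Aᵀ)⁻¹ *ᵥ e) ≠ 0 ∧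
    e ⬝ᵥ ((Γθ + Γt)⁻¹ *ᵥ e) ≠ 0 ∧
    (e ⬝ᵥ ((Γθ + Γt)⁻¹ *ᵥ e))⁻¹ • ((Γθ + Γt)⁻¹ *ᵥ e)
      = (e ⬝ᵥ ((Aᵀ)⁻¹ *ᵥ e))⁻¹ • ((Aᵀ)⁻¹ *ᵥ e) ∧
    (e ⬝ᵥ ((Γθ - Γt)⁻¹ *ᵥ e))⁻¹ • ((Γθ - Γt)⁻¹ *ᵥ e)
      = (e ⬝ᵥ (A⁻¹ *ᵥ e))⁻¹ • (A⁻¹ *ᵥ e) := by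
  subst he
  exact stmt_3_general hG.le one_ne_zero (isSymm_one.smul _)
    (fun _ => dotProduct_smul_one_mulVec_self_pos (by positivity))
    (eq_smul_vecMulVec_one_of_apply_eq hΓ) hΓθ
    (add_transpose_eq_of_lowerTriangular_of_apply_eq hΓ hΓt) hA
end

section
/- Set λ = 2θ/G + 1/2 and a = 1 − 1/λ. Then the components of the fundamental solutions are v_n = a^{n−1} / (λ(1 − a^{N+1})) and w_n = a^{N+1−n} / (λ(1 − a^{N+1})) for every n = 1, 2, …, N+1 (with the convention a⁰ = 1). -/
open Matrix

/-!
Write `L` for the lower triangular matrix with `λ` on the diagonal and `1` below it, and `J` for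
the all-ones matrix. Then `Γ_θ + Γ̃ = G (L + J)`, while `Γ_θ - Γ̃ = G Lᵀ`, and `Lᵀ` is `L` with the
order of rows and columns reversed. Since `λ (1 - a) = 1`, summing a geometric progression shows
that `L` maps `x = (1, a, …, a^N)` to `λ e`. Hence `L + J` maps `x` to a multiple of `e` as well,
and `Lᵀ` does the same to the reversal of `x`. So `v` and `w` are `x` and its reversal divided by
the sum of the entries, `λ (1 - a^(N+1))`. The matrix determinant lemma gives
`det (L + J) = λ^(N+1) (2 - a^(N+1))`, which is nonzero because `λ > 1/2` forces `|a| < 1`.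
-/

section FundamentalSolution

variable {ι K : Type*} [Fintype ι] [DecidableEq ι] [Field K] {M : Matrix ι ι K}

/-- The vector `M⁻¹ e / (eᵀ M⁻¹ e)` with `e = (1, …, 1)`: the solution of `M x ∝ e` whose entries
sum to one. It is meaningful only when `M` is invertible and `eᵀ M⁻¹ e ≠ 0`. -/
noncomputable def fundamentalSolution (M : Matrix ι ι K) : ι → K :=
  (1 ⬝ᵥ (M⁻¹ *ᵥ 1))⁻¹ • (M⁻¹ *ᵥ 1)

theorem fundamentalSolution_eq_of_mulVec_eq (hM : IsUnit M.det) {x : ι → K} {c : K} (hc : c ≠ 0)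
    (hx : M *ᵥ x = c • 1) : fundamentalSolution M = (1 ⬝ᵥ x)⁻¹ • x := by
  have hinv : M⁻¹ *ᵥ 1 = c⁻¹ • x := by
    rw [← inv_smul_smul₀ hc (1 : ι → K), ← hx, mulVec_smul, mulVec_mulVec,
      nonsing_inv_mul _ hM, one_mulVec]
  rw [fundamentalSolution, hinv, dotProduct_smul, smul_eq_mul, smul_smul, _root_.mul_inv_rev,
    inv_inv, mul_assoc, mul_inv_cancel₀ hc, mul_one]

theorem fundamentalSolution_smul (hM : IsUnit M.det) {c : K} (hc : c ≠ 0) :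
    fundamentalSolution (c • M) = fundamentalSolution M := by
  have hcM : IsUnit (c • M).det := by
    rw [det_smul]
    exact (hc.isUnit.pow _).mul hM
  refine fundamentalSolution_eq_of_mulVec_eq hcM hc ?_
  rw [smul_mulVec, mulVec_mulVec, mul_nonsing_inv _ hM, one_mulVec]

theorem fundamentalSolution_submatrix_equiv (M : Matrix ι ι K) (σ : ι ≃ ι) :
    fundamentalSolution (M.submatrix σ σ) = fundamentalSolution M ∘ σ := by
  have hinv : (M.submatrix σ σ)⁻¹ *ᵥ 1 = (M⁻¹ *ᵥ 1) ∘ σ := by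
    rw [inv_submatrix_equiv, submatrix_mulVec_equiv, Pi.one_comp]
  have hsum : 1 ⬝ᵥ ((M⁻¹ *ᵥ 1) ∘ σ) = 1 ⬝ᵥ (M⁻¹ *ᵥ 1) :=
    comp_equiv_dotProduct_comp_equiv 1 (M⁻¹ *ᵥ 1) σ
  rw [fundamentalSolution, hinv, hsum]
  rfl

end FundamentalSolution

theorem det_add_vecMulVec_mulVec {ι R : Type*} [Fintype ι] [DecidableEq ι] [CommRing R]
    (A : Matrix ι ι R) (x y : ι → R) :
    (A + vecMulVec (A *ᵥ x) y).det = A.det * (1 + y ⬝ᵥ x) := by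
  have hfactor : A + vecMulVec (A *ᵥ x) y = A * (1 + vecMulVec x y) := by
    rw [mul_add, mul_one, mul_vecMulVec]
  rw [hfactor, det_mul, vecMulVec_eq Unit, det_one_add_replicateCol_mul_replicateRow]

section TriangularKernel

variable {R : Type*} {n : ℕ}

/-- The lower triangular matrix with `lam` on the diagonal and `1` below it. For
`lam = 2θ/G + 1/2`, its multiple by `G` is `2θI + Γ̃ = (Γ_θ - Γ̃)ᵀ`. -/
def triangularKernel [Zero R] [One R] (n : ℕ) (lam : R) : Matrix (Fin n) (Fin n) R :=
  of fun i j ↦ if j < i then 1 else if i = j then lam else 0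

/-- The geometric progression `(1, a, …, a^(n-1))`, the unnormalized form of `v`. -/
def geomVec [Monoid R] (n : ℕ) (a : R) : Fin n → R :=
  fun i ↦ a ^ (i : ℕ)

theorem transpose_triangularKernel [Zero R] [One R] (lam : R) :
    (triangularKernel n lam)ᵀ = (triangularKernel n lam).submatrix Fin.revPerm Fin.revPerm := by
  ext i j
  simp [triangularKernel, Fin.rev_lt_rev, eq_comm]

variable [CommRing R] {lam a : R}

theorem det_triangularKernel (n : ℕ) (lam : R) : (triangularKernel n lam).det = lam ^ n := by
  have hlower : (triangularKernel n lam).IsLowerTriangular := by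
    intro i j (hij : i < j)
    simp [triangularKernel, hij.not_gt, hij.ne]
  rw [det_of_isLowerTriangular _ hlower]
  simp [triangularKernel]

theorem sum_range_pow_eq_mul_one_sub_pow (h : lam * (1 - a) = 1) (n : ℕ) :
    ∑ i ∈ Finset.range n, a ^ i = lam * (1 - a ^ n) := by
  rw [← mul_neg_geom_sum, ← mul_assoc, h, one_mul]

theorem one_dotProduct_geomVec (h : lam * (1 - a) = 1) (n : ℕ) :
    1 ⬝ᵥ geomVec n a = lam * (1 - a ^ n) := by
  rw [one_dotProduct, ← sum_range_pow_eq_mul_one_sub_pow h, Finset.sum_range]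
  rfl

theorem triangularKernel_mulVec_geomVec (h : lam * (1 - a) = 1) (n : ℕ) :
    triangularKernel n lam *ᵥ geomVec n a = lam • 1 := by
  ext i
  have hentry (j : Fin n) : triangularKernel n lam i j * geomVec n a j =
      (if j < i then a ^ (j : ℕ) else 0) + if i = j then lam * a ^ (j : ℕ) else 0 := by
    rcases lt_trichotomy j i with hji | rfl | hij
    · simp [triangularKernel, geomVec, hji, hji.ne']
    · simp [triangularKernel, geomVec]
    · simp [triangularKernel, geomVec, hij.not_gt, hij.ne]
  have hbelow : ∑ j : Fin n, (if j < i then a ^ (j : ℕ) else 0) = lam * (1 - a ^ (i : ℕ)) := by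
    rw [← sum_range_pow_eq_mul_one_sub_pow h, ← Finset.sum_filter, Finset.filter_gt_eq_Iio,
      ← Nat.Iio_eq_range, ← Fin.map_valEmbedding_Iio, Finset.sum_map]
    rfl
  calc (triangularKernel n lam *ᵥ geomVec n a) i
      = lam * (1 - a ^ (i : ℕ)) + lam * a ^ (i : ℕ) := by
        simp only [mulVec, dotProduct, hentry, Finset.sum_add_distrib, hbelow,
          Finset.sum_ite_eq, Finset.mem_univ, if_true]
    _ = (lam • (1 : Fin n → R)) i := by simp only [Pi.smul_apply, Pi.one_apply, smul_eq_mul]; ring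

theorem triangularKernel_add_ones_mulVec_geomVec (h : lam * (1 - a) = 1) (n : ℕ) :
    (triangularKernel n lam + vecMulVec 1 1) *ᵥ geomVec n a = (lam * (2 - a ^ n)) • 1 := by
  rw [add_mulVec, triangularKernel_mulVec_geomVec h, vecMulVec_mulVec, one_dotProduct_geomVec h,
    op_smul_eq_smul, ← add_smul]
  ring_nf

theorem det_triangularKernel_add_ones (h : lam * (1 - a) = 1) (n : ℕ) :
    (triangularKernel n lam + vecMulVec 1 1).det = lam ^ n * (2 - a ^ n) := by
  have hsolve : triangularKernel n lam *ᵥ ((1 - a) • geomVec n a) = 1 := by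
    rw [mulVec_smul, triangularKernel_mulVec_geomVec h, smul_smul, mul_comm, h, one_smul]
  calc (triangularKernel n lam + vecMulVec 1 1).det
      = lam ^ n * (1 + (lam * (1 - a)) * (1 - a ^ n)) := by
        rw [← hsolve, det_add_vecMulVec_mulVec, hsolve, det_triangularKernel, dotProduct_smul,
          one_dotProduct_geomVec h, smul_eq_mul]
        ring
    _ = lam ^ n * (2 - a ^ n) := by rw [h]; ring

end TriangularKernel

section ConstantKernel

variable {K : Type*} [Field K] {lam a : K} {n : ℕ}

theorem fundamentalSolution_triangularKernel (h : lam * (1 - a) = 1) :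
    fundamentalSolution (triangularKernel n lam) = (lam * (1 - a ^ n))⁻¹ • geomVec n a := by
  have hlam : lam ≠ 0 := left_ne_zero_of_mul_eq_one h
  have hdet : IsUnit (triangularKernel n lam).det := by
    rw [det_triangularKernel]
    exact hlam.isUnit.pow n
  rw [fundamentalSolution_eq_of_mulVec_eq hdet hlam (triangularKernel_mulVec_geomVec h n),
    one_dotProduct_geomVec h]

theorem fundamentalSolution_transpose_triangularKernel (h : lam * (1 - a) = 1) :
    fundamentalSolution (triangularKernel n lam)ᵀ =
      (lam * (1 - a ^ n))⁻¹ • (geomVec n a ∘ Fin.rev) := by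
  rw [transpose_triangularKernel, fundamentalSolution_submatrix_equiv,
    fundamentalSolution_triangularKernel h]
  rfl

theorem isUnit_det_triangularKernel_add_ones (h : lam * (1 - a) = 1) (h2 : a ^ n ≠ 2) :
    IsUnit (triangularKernel n lam + vecMulVec 1 1).det := by
  rw [det_triangularKernel_add_ones h]
  exact ((left_ne_zero_of_mul_eq_one h).isUnit.pow n).mul (sub_ne_zero.mpr h2.symm).isUnit

theorem fundamentalSolution_triangularKernel_add_ones (h : lam * (1 - a) = 1) (h2 : a ^ n ≠ 2) :
    fundamentalSolution (triangularKernel n lam + vecMulVec 1 1) =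
      (lam * (1 - a ^ n))⁻¹ • geomVec n a := by
  have hc : lam * (2 - a ^ n) ≠ 0 :=
    mul_ne_zero (left_ne_zero_of_mul_eq_one h) (sub_ne_zero.mpr h2.symm)
  rw [fundamentalSolution_eq_of_mulVec_eq (isUnit_det_triangularKernel_add_ones h h2) hc
    (triangularKernel_add_ones_mulVec_geomVec h n), one_dotProduct_geomVec h]

variable {G θ : K} {Γ Γt : Matrix (Fin n) (Fin n) K}

theorem add_smul_one_add_eq_smul_triangularKernel_add_ones (hdiag : G * lam = 2 * θ + G / 2)
    (hΓ : ∀ i j, Γ i j = G)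
    (hΓt : ∀ i j, Γt i j = if j < i then G else if i = j then G / 2 else 0) :
    Γ + (2 * θ) • 1 + Γt = G • (triangularKernel n lam + vecMulVec 1 1) := by
  ext i j
  rcases lt_trichotomy i j with hij | rfl | hji
  · simp [hΓ, hΓt, triangularKernel, hij.not_gt, hij.ne]
  · have hentry : G + 2 * θ + G / 2 = G * (lam + 1) := by linear_combination -hdiag
    simpa [hΓ, hΓt, triangularKernel] using hentry
  · simp [hΓ, hΓt, triangularKernel, hji, hji.ne', mul_add]

theorem add_smul_one_sub_eq_smul_transpose_triangularKernel (h2 : (2 : K) ≠ 0)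
    (hdiag : G * lam = 2 * θ + G / 2) (hΓ : ∀ i j, Γ i j = G)
    (hΓt : ∀ i j, Γt i j = if j < i then G else if i = j then G / 2 else 0) :
    Γ + (2 * θ) • 1 - Γt = G • (triangularKernel n lam)ᵀ := by
  ext i j
  rcases lt_trichotomy i j with hij | rfl | hji
  · simp [hΓ, hΓt, triangularKernel, hij, hij.not_gt, hij.ne]
  · have hentry : G + 2 * θ - G / 2 = G * lam := by
      rw [hdiag]
      field_simp
      ring
    simpa [hΓ, hΓt, triangularKernel] using hentry
  · simp [hΓ, hΓt, triangularKernel, hji, hji.not_gt, hji.ne, hji.ne']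

end ConstantKernel

theorem one_sub_one_div_pow_lt_one {K : Type*} [Field K] [LinearOrder K] [IsStrictOrderedRing K]
    {lam : K} (hlam : 1 / 2 < lam) {n : ℕ} (hn : n ≠ 0) : (1 - 1 / lam) ^ n < 1 := by
  have hpos : 0 < lam := one_half_pos.trans hlam
  have hinv_pos : 0 < 1 / lam := one_div_pos.mpr hpos
  have hinv_lt : 1 / lam < 2 := (one_div_lt hpos two_pos).mpr hlam
  have habs : |1 - 1 / lam| < 1 := abs_lt.mpr ⟨by linarith, by linarith⟩
  calc (1 - 1 / lam) ^ n ≤ |1 - 1 / lam| ^ n := (le_abs_self _).trans (abs_pow _ n).le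
    _ < 1 := pow_lt_one₀ (abs_nonneg _) habs hn

/-- Here `a^(N+1) ≠ 2` says that `Γθ + Γt` is invertible, and `a^(N+1) ≠ 1` that the denominators
of the fundamental solutions do not vanish. -/
theorem stmt_5_general {K : Type*} [Field K] (N : ℕ) (G θ : K) (hG : G ≠ 0)
    (lam a : K) (hlam : lam = 2 * θ / G + 1 / 2) (ha : a = 1 - 1 / lam)
    (hlam0 : lam ≠ 0) (_ha1 : a ^ (N + 1) ≠ 1) (ha2 : a ^ (N + 1) ≠ 2)
    (Γ Γθ Γt : Matrix (Fin (N + 1)) (Fin (N + 1)) K)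
    (hΓ : ∀ i j : Fin (N + 1), Γ i j = G)
    (hΓθ : Γθ = Γ + (2 * θ) • (1 : Matrix (Fin (N + 1)) (Fin (N + 1)) K))
    (hΓt : ∀ i j : Fin (N + 1), Γt i j = if j < i then G else if i = j then G / 2 else 0)
    (e : Fin (N + 1) → K) (he : e = fun _ => 1)
    (v w : Fin (N + 1) → K)
    (hv : v = (e ⬝ᵥ ((Γθ + Γt)⁻¹ *ᵥ e))⁻¹ • ((Γθ + Γt)⁻¹ *ᵥ e))
    (hw : w = (e ⬝ᵥ ((Γθ - Γt)⁻¹ *ᵥ e))⁻¹ • ((Γθ - Γt)⁻¹ *ᵥ e)) :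
    ∀ n : Fin (N + 1),
      v n = a ^ n.val / (lam * (1 - a ^ (N + 1))) ∧
      w n = a ^ (N - n.val) / (lam * (1 - a ^ (N + 1))) := by
  have h : lam * (1 - a) = 1 := by rw [ha, sub_sub_cancel, mul_one_div_cancel hlam0]
  have h2 : (2 : K) ≠ 0 := by
    intro h2
    simp [hlam, h2] at hlam0
  have hdiag : G * lam = 2 * θ + G / 2 := by rw [hlam]; field_simp
  have hv' : v = (lam * (1 - a ^ (N + 1)))⁻¹ • geomVec (N + 1) a := by
    rw [← fundamentalSolution_triangularKernel_add_ones h ha2,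
      ← fundamentalSolution_smul (isUnit_det_triangularKernel_add_ones h ha2) hG,
      ← add_smul_one_add_eq_smul_triangularKernel_add_ones hdiag hΓ hΓt, ← hΓθ, hv, he]
    rfl
  have hw' : w = (lam * (1 - a ^ (N + 1)))⁻¹ • (geomVec (N + 1) a ∘ Fin.rev) := by
    have hdet : IsUnit (triangularKernel (N + 1) lam)ᵀ.det := by
      rw [det_transpose, det_triangularKernel]
      exact hlam0.isUnit.pow _
    rw [← fundamentalSolution_transpose_triangularKernel h, ← fundamentalSolution_smul hdet hG,
      ← add_smul_one_sub_eq_smul_transpose_triangularKernel h2 hdiag hΓ hΓt, ← hΓθ, hw, he]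
    rfl
  intro n
  simp [hv', hw', geomVec, div_eq_inv_mul]

/-- With `λ = 2θ/G + 1/2` and `a = 1 − 1/λ`, the components of the fundamental solutions
are `v_n = a^{n−1}/(λ(1 − a^{N+1}))` and `w_n = a^{N+1−n}/(λ(1 − a^{N+1}))` for
`n = 1,…,N+1` (0-based: `v i = a^i.val / …`, `w i = a^{N−i.val} / …`). -/
theorem stmt_5 (N : ℕ) (hN : 1 ≤ N) (G θ : ℝ) (hG : 0 < G) (hθ : 0 < θ)
    (lam a : ℝ) (hlam : lam = 2*θ/G + 1/2) (ha : a = 1 - 1/lam)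
    (Γ Γθ Γt : Matrix (Fin (N+1)) (Fin (N+1)) ℝ)
    (hΓ : ∀ i j : Fin (N+1), Γ i j = G)
    (hΓθ : Γθ = Γ + (2*θ) • (1 : Matrix (Fin (N+1)) (Fin (N+1)) ℝ))
    (hΓt : ∀ i j : Fin (N+1), Γt i j = if j < i then G else if i = j then G/2 else 0)
    (e : Fin (N+1) → ℝ) (he : e = fun _ => 1)
    (v w : Fin (N+1) → ℝ)
    (hv : v = (e ⬝ᵥ ((Γθ + Γt)⁻¹ *ᵥ e))⁻¹ • ((Γθ + Γt)⁻¹ *ᵥ e))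
    (hw : w = (e ⬝ᵥ ((Γθ - Γt)⁻¹ *ᵥ e))⁻¹ • ((Γθ - Γt)⁻¹ *ᵥ e)) :
    ∀ n : Fin (N+1),
      v n = a^(n.val) / (lam * (1 - a^(N+1))) ∧
      w n = a^(N - n.val) / (lam * (1 - a^(N+1))) := by
  have hone_half_lt : 1 / 2 < lam := by rw [hlam]; exact lt_add_of_pos_left _ (by positivity)
  have hpow : a ^ (N + 1) < 1 := ha ▸ one_sub_one_div_pow_lt_one hone_half_lt N.succ_ne_zero
  exact stmt_5_general N G θ hG.ne' lam a hlam ha (one_half_pos.trans hone_half_lt).ne' hpow.ne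
    (hpow.trans one_lt_two).ne Γ Γθ Γt hΓ hΓθ hΓt e he v w hv hw
end

section
/- Suppose θ > G/4 and X > 0. Then X − 2ξ_1 ≠ 0, and setting β = −2θN·(ξ_1 − ξ_2)/(X − 2ξ_1), there exists α ∈ ℝ such that the symmetric Toeplitz matrix Π with entries Π_{ij} = 2θ·1_{{i=j}} + α + β·|i−j|/N satisfies Π·ξ = e, where e = (1,…,1)ᵀ ∈ ℝ^{N+1}. In other words, a linear implied transient impact function always exists for the directional Nash-equilibrium schedule. -/
open Matrix

/-! Write `D` for the matrix `|i - j|`. Consecutive entries of `D v` differ by twice a partial sum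
of `v` minus its total. For the symmetric geometric vector `s j = a ^ j + a ^ (N - j)` these
differences are `μ = 2a / (1 - a)²` times those of `s`, so `D s - μ s` is constant. The linear part
of the kernel therefore cancels the diagonal `2θ` up to a constant as soon as `β μ = -2θN`, and `α`
then normalizes the common row value to `1`. Comparing the first two rows gives
`μ (v 0 - v 1) = ∑ v - 2 v 0`, which is where the formula for `β` comes from. -/

open Finset

/-- The distance matrix `|i - j|` of the points `0, …, N`: the linear impact kernel `t ↦ t` on the
equidistant grid, with time measured in grid steps. -/
def distMatrix (R : Type*) [NatCast R] (N : ℕ) : Matrix (Fin (N + 1)) (Fin (N + 1)) R :=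
  of fun i j => (Nat.dist i j : R)

/-- The unnormalized profile `a ^ j + a ^ (N - j)` of the directional equilibrium schedule; the
index is 0-based. -/
def symmGeom {R : Type*} [Semiring R] (a : R) (N : ℕ) (j : Fin (N + 1)) : R :=
  a ^ (j : ℕ) + a ^ (N - j)

section CommRing

variable {R : Type*} [CommRing R] {N : ℕ}

lemma cast_dist_succ_sub_cast_dist_castSucc (i : Fin N) (j : Fin (N + 1)) :
    (Nat.dist i.succ j : R) - Nat.dist i.castSucc j = if j ≤ i.castSucc then 1 else -1 := by
  split_ifs with h <;> rw [Fin.le_def, Fin.val_castSucc] at h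
  · have : Nat.dist i.succ j = Nat.dist i.castSucc j + 1 := by
      simp only [Nat.dist, Fin.val_succ, Fin.val_castSucc]; omega
    rw [this, Nat.cast_succ, add_sub_cancel_left]
  · have : Nat.dist i.castSucc j = Nat.dist i.succ j + 1 := by
      simp only [Nat.dist, Fin.val_succ, Fin.val_castSucc]; omega
    rw [this, Nat.cast_succ, sub_add_cancel_left]

lemma distMatrix_mulVec_succ_sub_castSucc (v : Fin (N + 1) → R) (i : Fin N) :
    (distMatrix R N *ᵥ v) i.succ - (distMatrix R N *ᵥ v) i.castSucc =
      2 * ∑ j ∈ Iic i.castSucc, v j - ∑ j, v j := by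
  have partial_sum : ∑ j ∈ Iic i.castSucc, v j = ∑ j, if j ≤ i.castSucc then v j else 0 := by
    rw [← sum_filter, filter_ge_eq_Iic]
  simp only [mulVec, dotProduct, distMatrix, of_apply]
  rw [partial_sum, mul_sum, ← sum_sub_distrib, ← sum_sub_distrib]
  refine sum_congr rfl fun j _ => ?_
  rw [← sub_mul, cast_dist_succ_sub_cast_dist_castSucc]
  split_ifs <;> ring

lemma symmGeom_succ_sub_castSucc (a : R) (i : Fin N) :
    symmGeom a N i.succ - symmGeom a N i.castSucc =
      (1 - a) * (a ^ (N - (i + 1) : ℕ) - a ^ (i : ℕ)) := by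
  have : N - i = N - (i + 1) + 1 := by omega
  simp only [symmGeom, Fin.val_succ, Fin.val_castSucc, this]
  ring

lemma symmGeom_zero_sub_one (a : R) (hN : N ≠ 0) :
    symmGeom a N 0 - symmGeom a N 1 = (1 - a) * (1 - a ^ (N - 1)) := by
  obtain ⟨n, rfl⟩ := Nat.exists_eq_succ_of_ne_zero hN
  have first_step := symmGeom_succ_sub_castSucc a (0 : Fin (n + 1))
  rw [Fin.succ_zero_eq_one, Fin.castSucc_zero, Fin.val_zero, zero_add, pow_zero] at first_step
  linear_combination -first_step

lemma one_sub_mul_sum_Iic_symmGeom (a : R) (i : Fin (N + 1)) :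
    (1 - a) * ∑ j ∈ Iic i, symmGeom a N j =
      1 - a ^ (i + 1 : ℕ) + a ^ (N - i) - a ^ (N + 1) := by
  induction i using Fin.induction with
  | zero =>
    have : Iic (0 : Fin (N + 1)) = {0} := Iic_bot
    simp only [this, sum_singleton, symmGeom, Fin.val_zero, Nat.sub_zero]
    ring
  | succ i ih =>
    have insert_succ : Iic i.succ = insert i.succ (Iic i.castSucc) := by
      ext j
      simp only [mem_insert, mem_Iic, Fin.le_def, Fin.ext_iff, Fin.val_succ, Fin.val_castSucc]
      omega
    have : N - i = N - (i + 1) + 1 := by omega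
    rw [insert_succ, sum_insert (by simp [Fin.le_def]), mul_add, ih]
    simp only [symmGeom, Fin.val_succ, Fin.val_castSucc, this]
    ring

lemma one_sub_mul_sum_symmGeom (a : R) (N : ℕ) :
    (1 - a) * ∑ j, symmGeom a N j = 2 * (1 - a ^ (N + 1)) := by
  have : Iic (Fin.last N) = univ := Iic_top
  rw [← this, one_sub_mul_sum_Iic_symmGeom, Fin.val_last, Nat.sub_self]
  ring

lemma one_sub_sq_mul_distMatrix_mulVec_symmGeom (a : R) (i : Fin (N + 1)) :
    (1 - a) ^ 2 * (distMatrix R N *ᵥ symmGeom a N) i - 2 * a * symmGeom a N i =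
      (1 - a) ^ 2 * (distMatrix R N *ᵥ symmGeom a N) 0 - 2 * a * symmGeom a N 0 := by
  induction i using Fin.induction with
  | zero => rfl
  | succ i ih =>
    have step_dist := distMatrix_mulVec_succ_sub_castSucc (symmGeom a N) i
    have step_geom := symmGeom_succ_sub_castSucc a i
    have partial_sum := one_sub_mul_sum_Iic_symmGeom a i.castSucc
    have total := one_sub_mul_sum_symmGeom a N
    have : N - i = N - (i + 1) + 1 := by omega
    rw [Fin.val_castSucc, this] at partial_sum
    linear_combination ih + (1 - a) ^ 2 * step_dist - 2 * a * step_geom +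
      2 * (1 - a) * partial_sum - (1 - a) * total

lemma sum_sub_two_mul_zero_of_distMatrix_mulVec {v : Fin (N + 1) → R} {μ c : R} (hN : N ≠ 0)
    (hv : ∀ i, (distMatrix R N *ᵥ v) i = c + μ * v i) :
    ∑ j, v j - 2 * v 0 = μ * (v 0 - v 1) := by
  obtain ⟨n, rfl⟩ := Nat.exists_eq_succ_of_ne_zero hN
  have first_rows := distMatrix_mulVec_succ_sub_castSucc v 0
  have : Iic (0 : Fin (n + 1 + 1)) = {0} := Iic_bot
  rw [Fin.succ_zero_eq_one, Fin.castSucc_zero, this, sum_singleton, hv, hv] at first_rows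
  linear_combination first_rows

end CommRing

section Field

variable {K : Type*} [Field K] {N : ℕ}

/-- The matrix `Π` of the transient impact model on the equidistant grid `0, 1/N, …, 1` with linear
kernel `t ↦ α + β t` and temporary cost `θ`. -/
def linearImpactMatrix (N : ℕ) (θ α β : K) : Matrix (Fin (N + 1)) (Fin (N + 1)) K :=
  of fun i j => (if i = j then 2 * θ else 0) + α + β * (Nat.dist i j) / N

lemma linearImpactMatrix_mulVec (θ α β : K) (v : Fin (N + 1) → K) (i : Fin (N + 1)) :
    (linearImpactMatrix N θ α β *ᵥ v) i =
      2 * θ * v i + α * ∑ j, v j + β / N * (distMatrix K N *ᵥ v) i := by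
  simp only [linearImpactMatrix, distMatrix, mulVec, dotProduct, of_apply, add_mul, ite_mul,
    zero_mul, sum_add_distrib, sum_ite_eq, mem_univ, if_true, mul_sum]
  congr 1
  exact sum_congr rfl fun j _ => by ring

lemma exists_linearImpactMatrix_mulVec_eq_one_of_mul_eq {θ β μ c : K} {v : Fin (N + 1) → K}
    (hsum : ∑ j, v j ≠ 0) (hv : ∀ i, (distMatrix K N *ᵥ v) i = c + μ * v i)
    (hβ : β / N * μ = -2 * θ) :
    ∃ α, linearImpactMatrix N θ α β *ᵥ v = fun _ => 1 := by
  refine ⟨(1 - β / N * c) / ∑ j, v j, funext fun i => ?_⟩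
  rw [linearImpactMatrix_mulVec, div_mul_cancel₀ _ hsum, hv]
  linear_combination v i * hβ

lemma exists_linearImpactMatrix_mulVec_eq_one {μ c : K} {v : Fin (N + 1) → K} (θ : K)
    (hN : (N : K) ≠ 0) (hsum : ∑ j, v j ≠ 0) (hgap : ∑ j, v j - 2 * v 0 ≠ 0)
    (hv : ∀ i, (distMatrix K N *ᵥ v) i = c + μ * v i) :
    ∃ α, linearImpactMatrix N θ α (-2 * θ * N * (v 0 - v 1) / (∑ j, v j - 2 * v 0)) *ᵥ v =
      fun _ => 1 := by
  have hN0 : N ≠ 0 := by rintro rfl; exact hN Nat.cast_zero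
  refine exists_linearImpactMatrix_mulVec_eq_one_of_mul_eq hsum hv ?_
  rw [div_div, div_mul_eq_mul_div, div_eq_iff (mul_ne_zero hgap hN),
    sum_sub_two_mul_zero_of_distMatrix_mulVec hN0 hv]
  ring

lemma exists_distMatrix_mulVec_smul_symmGeom {a : K} (ha : a ≠ 1) (c : K) (N : ℕ) :
    ∃ d, ∀ i, (distMatrix K N *ᵥ (c • symmGeom a N)) i =
      d + 2 * a / (1 - a) ^ 2 * (c • symmGeom a N) i := by
  have h1a : 1 - a ≠ 0 := sub_ne_zero.2 ha.symm
  refine ⟨c * ((distMatrix K N *ᵥ symmGeom a N) 0 -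
    2 * a / (1 - a) ^ 2 * symmGeom a N 0), fun i => ?_⟩
  have const_diff := one_sub_sq_mul_distMatrix_mulVec_symmGeom a i
  simp only [mulVec_smul, Pi.smul_apply, smul_eq_mul]
  field_simp
  linear_combination c * const_diff

lemma sum_smul_symmGeom {a : K} (h2 : (2 : K) ≠ 0) (hsucc : a ^ (N + 1) ≠ 1) (X : K) :
    ∑ j, ((X * (1 - a) / (2 * (1 - a ^ (N + 1)))) • symmGeom a N) j = X := by
  have hD : 2 * (1 - a ^ (N + 1)) ≠ 0 := mul_ne_zero h2 (sub_ne_zero.2 hsucc.symm)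
  simp only [Pi.smul_apply, smul_eq_mul, ← mul_sum]
  rw [div_mul_eq_mul_div, mul_assoc, one_sub_mul_sum_symmGeom, mul_div_cancel_right₀ _ hD]

theorem stmt_12_general {θ X lam a : K} {ξ : Fin (N + 1) → K} (h2 : (2 : K) ≠ 0)
    (hN : (N : K) ≠ 0) (hX : X ≠ 0) (ha : a = 1 - 1 / lam) (ha0 : a ≠ 0)
    (hpred : a ^ (N - 1) ≠ 1) (hsucc : a ^ (N + 1) ≠ 1)
    (hξ : ∀ k : Fin (N + 1),
      ξ k = X / 2 * (a ^ (k : ℕ) + a ^ (N - k)) / (lam * (1 - a ^ (N + 1)))) :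
    X - 2 * ξ 0 ≠ 0 ∧
    ∃ α, linearImpactMatrix N θ α (-2 * θ * N * (ξ 0 - ξ 1) / (X - 2 * ξ 0)) *ᵥ ξ =
      fun _ => 1 := by
  have hN0 : N ≠ 0 := by rintro rfl; exact hN Nat.cast_zero
  have ha1 : a ≠ 1 := by rintro rfl; exact hsucc (one_pow _)
  have h1a : 1 - a ≠ 0 := sub_ne_zero.2 ha1.symm
  have hD : 1 - a ^ (N + 1) ≠ 0 := sub_ne_zero.2 hsucc.symm
  have hlam : lam = (1 - a)⁻¹ := by rw [ha]; simp
  obtain ⟨c, hc⟩ : ∃ c, c = X * (1 - a) / (2 * (1 - a ^ (N + 1))) := ⟨_, rfl⟩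
  have hc0 : c ≠ 0 := hc ▸ by positivity
  have ξ_eq : ξ = c • symmGeom a N := by
    funext k
    rw [hξ, hc, hlam, Pi.smul_apply, smul_eq_mul, symmGeom]
    field_simp
  have sum_ξ : ∑ j, ξ j = X := by rw [ξ_eq, hc, sum_smul_symmGeom h2 hsucc]
  obtain ⟨d, hd⟩ := exists_distMatrix_mulVec_smul_symmGeom ha1 c N
  rw [← ξ_eq] at hd
  have drop_ne : ξ 0 - ξ 1 ≠ 0 := by
    rw [ξ_eq, Pi.smul_apply, Pi.smul_apply, ← smul_sub, symmGeom_zero_sub_one a hN0]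
    exact smul_ne_zero hc0 (mul_ne_zero h1a (sub_ne_zero.2 hpred.symm))
  have gap_ne : ∑ j, ξ j - 2 * ξ 0 ≠ 0 := by
    rw [sum_sub_two_mul_zero_of_distMatrix_mulVec hN0 hd]
    positivity
  rw [← sum_ξ] at hX ⊢
  exact ⟨gap_ne, exists_linearImpactMatrix_mulVec_eq_one θ hN hX gap_ne hd⟩

end Field

lemma one_lt_two_mul_div_add_half {G θ : ℝ} (hG : 0 < G) (hθ : G / 4 < θ) :
    1 < 2 * θ / G + 1 / 2 := by
  have : 1 / 2 < 2 * θ / G := by rw [lt_div_iff₀ hG]; linarith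
  linarith

lemma one_sub_one_div_mem_Ioo {lam : ℝ} (hlam : 1 < lam) : 1 - 1 / lam ∈ Set.Ioo 0 1 :=
  ⟨sub_pos.2 ((div_lt_one (by positivity)).2 hlam), sub_lt_self _ (by positivity)⟩

/-- If `θ > G/4` and `X > 0`, then `X − 2ξ_1 ≠ 0`, and with
`β = −2θN(ξ_1 − ξ_2)/(X − 2ξ_1)` there exists `α ∈ ℝ` such that the symmetric Toeplitz
matrix `Π` with `Π_{ij} = 2θ·1_{i=j} + α + β·|i−j|/N` satisfies `Π·ξ = e`: a linear
implied transient impact function always exists.  (Indices are 0-based, so `ξ_1 = ξ 0`,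
`ξ_2 = ξ 1`.) -/
theorem stmt_12 (N : ℕ) (hN : 2 ≤ N) (G θ X : ℝ) (hG : 0 < G) (hθ : G/4 < θ) (hX : 0 < X)
    (lam a : ℝ) (hlam : lam = 2*θ/G + 1/2) (ha : a = 1 - 1/lam)
    (ξ : Fin (N+1) → ℝ)
    (hξ : ∀ k : Fin (N+1),
      ξ k = (X/2) * (a^(k.val) + a^(N - k.val)) / (lam * (1 - a^(N+1)))) :
    X - 2 * ξ 0 ≠ 0 ∧
    ∃ α : ℝ,
      (Matrix.of fun i j : Fin (N+1) =>
          (if i = j then 2*θ else 0) + α +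
            (-2*θ*N*(ξ 0 - ξ 1)/(X - 2*ξ 0)) * (Nat.dist i.val j.val) / N) *ᵥ ξ
        = fun _ => 1 := by
  obtain ⟨ha0, ha1⟩ : a ∈ Set.Ioo 0 1 :=
    ha ▸ one_sub_one_div_mem_Ioo (hlam ▸ one_lt_two_mul_div_add_half hG hθ)
  have pow_ne_one {n : ℕ} (hn : n ≠ 0) : a ^ n ≠ 1 := (pow_lt_one₀ ha0.le ha1 hn).ne
  exact stmt_12_general two_ne_zero (by positivity) hX.ne' ha ha0.ne' (pow_ne_one (by omega))
    (pow_ne_one N.succ_ne_zero) hξ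
end
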